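/- arXiv:1612.03689 — 2 statements merged into one kernel-verified Lean document; each statement's English description precedes it below -/
import Mathlib

section
/- Let μ(dt) = e^{−V(t)}dt on a bounded interval [a,b] with V twice continuously differentiable, and suppose f is a strictly monotonic solution of Lf = −λf with f'(a) = f'(b) = 0 for some λ > 0, where Lf = f'' − V'f'. Then λ is the Neumann spectral gap of μ, i.e., C_P(μ) = 1/λ. -/
/-!
Write `w = exp (-V)`, so that the eigenvalue equation becomes `(w u')' = -lam w u`. Testing the
Poincaré inequality with a Neumann eigenfunction shows that no constant below `1 / lam` is
admissible, for any positive Neumann eigenvalue `lam`.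

For the converse let `u` be an eigenfunction with a single zero `c`, as every strictly monotone one
is. If `g` vanishes at `c`, Picone's identity
`(g² w u' / u)' = (g'² - lam g² - (g' - g u' / u)²) w`
holds across `c` as well, because `c` is a simple zero of `u`. Since `w u'` vanishes at both end
points, integrating gives `lam ∫ g² w ≤ ∫ g'² w`; applying this to `g - g c` bounds the variance
of `g`. Thus `1 / lam` is the optimal Poincaré constant, and `lam` is the smallest positive
Neumann eigenvalue.
-/

open MeasureTheory Real Set

/-- Variance of `f` under `μ`, as `inf_a ∫ (f-a)^2 dμ`. -/
noncomputable def Var (μ : Measure ℝ) (f : ℝ → ℝ) : ℝ := ⨅ a : ℝ, ∫ x, (f x - a)^2 ∂μ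

/-- `μ` satisfies a Poincaré inequality with constant `C`, over test functions that are
differentiable on the supporting interval `s` with `f, f' ∈ L²(μ)`. -/
def PoincareOn (μ : Measure ℝ) (s : Set ℝ) (C : ℝ) : Prop :=
  ∀ f f' : ℝ → ℝ, (∀ x ∈ s, HasDerivAt f (f' x) x) →
    Integrable (fun x => (f x)^2) μ → Integrable (fun x => (f' x)^2) μ →
    Var μ f ≤ C * ∫ x, (f' x)^2 ∂μ

/-- The optimal Poincaré constant of `μ` on the interval `s`. -/
noncomputable def CP (μ : Measure ℝ) (s : Set ℝ) : ℝ := sInf {C | 0 ≤ C ∧ PoincareOn μ s C}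

/-- `(u, u')` solves `u'' - V'u' = -λu` on `[a,b]`. -/
def IsSol (V' : ℝ → ℝ) (a b lam : ℝ) (u u' : ℝ → ℝ) : Prop :=
  (∀ t ∈ Set.Icc a b, HasDerivAt u (u' t) t) ∧
  (∀ t ∈ Set.Icc a b, HasDerivAt u' (V' t * u' t - lam * u t) t)

/-- `lam` is a Neumann eigenvalue of `f'' - V'f' = -λf` on `[a,b]`. -/
def IsNeumannEig (V' : ℝ → ℝ) (a b lam : ℝ) : Prop :=
  ∃ u u' : ℝ → ℝ, IsSol V' a b lam u u' ∧ (∃ x ∈ Set.Icc a b, u x ≠ 0) ∧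
    u' a = 0 ∧ u' b = 0

open Filter Topology

section Calculus

variable {E : Type*} [NormedAddCommGroup E] [NormedSpace ℝ E] [CompleteSpace E]
  {f f' : ℝ → E} {s : Set ℝ}

theorem aestronglyMeasurable_restrict_of_hasDerivAt (hs : MeasurableSet s)
    (hf : ∀ x ∈ s, HasDerivAt f (f' x) x) : AEStronglyMeasurable f' (volume.restrict s) :=
  (aestronglyMeasurable_deriv f _).congr <|
    (ae_restrict_mem hs).mono fun x hx => (hf x hx).deriv

theorem norm_sub_le_setIntegral_norm_of_hasDerivAt (hs : s.OrdConnected)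
    (hf : ∀ x ∈ s, HasDerivAt f (f' x) x) (hf' : IntegrableOn f' s) {x y : ℝ} (hx : x ∈ s)
    (hy : y ∈ s) : ‖f y - f x‖ ≤ ∫ t in s, ‖f' t‖ := by
  have hsub : uIcc x y ⊆ s := hs.uIcc_subset hx hy
  have hsub' : uIoc x y ⊆ s := uIoc_subset_uIcc.trans hsub
  calc ‖f y - f x‖ = ‖∫ t in x..y, f' t‖ := by
        rw [intervalIntegral.integral_eq_sub_of_hasDerivAt (fun t ht => hf t (hsub ht))
          (intervalIntegrable_iff.2 (hf'.mono_set hsub'))]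
    _ ≤ ∫ t in uIoc x y, ‖f' t‖ := intervalIntegral.norm_integral_le_integral_norm_uIoc
    _ ≤ ∫ t in s, ‖f' t‖ :=
        setIntegral_mono_set hf'.norm (Eventually.of_forall fun _ => norm_nonneg _)
          hsub'.eventuallyLE

theorem exists_norm_le_of_hasDerivAt_of_integrableOn {a b : ℝ}
    (hf : ∀ x ∈ Ioo a b, HasDerivAt f (f' x) x) (hf' : IntegrableOn f' (Ioo a b)) :
    ∃ M, ∀ x ∈ Icc a b, ‖f x‖ ≤ M := by
  rcases le_or_gt b a with hba | hab
  · exact ⟨‖f a‖, fun x hx => by rw [le_antisymm (hx.2.trans hba) hx.1]⟩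
  obtain ⟨c, hc⟩ := nonempty_Ioo.2 hab
  have hIoo : ∀ x ∈ Ioo a b, ‖f x‖ ≤ ‖f c‖ + ∫ t in Ioo a b, ‖f' t‖ := fun x hx =>
    (norm_le_norm_add_norm_sub' (f x) (f c)).trans <| by
      gcongr
      exact norm_sub_le_setIntegral_norm_of_hasDerivAt ordConnected_Ioo hf hf' hc hx
  refine ⟨max (‖f c‖ + ∫ t in Ioo a b, ‖f' t‖) (max ‖f a‖ ‖f b‖), fun x hx => ?_⟩
  rcases eq_endpoints_or_mem_Ioo_of_mem_Icc hx with rfl | rfl | hx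
  · exact le_max_of_le_right (le_max_left _ _)
  · exact le_max_of_le_right (le_max_right _ _)
  · exact le_max_of_le_left (hIoo x hx)

theorem hasDerivAt_sq_mul_div_of_eq_zero {u g p : ℝ → ℝ} {u' g' x : ℝ} (hu : HasDerivAt u u' x)
    (hg : HasDerivAt g g' x) (hp : ContinuousAt p x) (hux : u x = 0) (hu' : u' ≠ 0)
    (hgx : g x = 0) : HasDerivAt (fun t => g t ^ 2 * p t / u t) (g' ^ 2 * p x / u') x := by
  rw [hasDerivAt_iff_tendsto_slope]
  have hlim := ((hg.tendsto_slope.pow 2).mul (hp.tendsto.mono_left nhdsWithin_le_nhds)).div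
    hu.tendsto_slope hu'
  refine hlim.congr' ?_
  filter_upwards [self_mem_nhdsWithin] with t ht
  have htx : t - x ≠ 0 := sub_ne_zero.2 ht
  simp only [Pi.div_apply, slope_def_field, hgx, hux, sub_zero, div_zero]
  by_cases hut : u t = 0
  · simp [hut]
  · field_simp

end Calculus

section Measure

theorem setLIntegral_ofReal_ne_zero {α : Type*} [MeasurableSpace α] {μ : Measure α} {s : Set α}
    {w : α → ℝ} (hs : MeasurableSet s) (hμs : μ s ≠ 0) (hw : AEMeasurable w (μ.restrict s))
    (hw0 : ∀ t ∈ s, 0 < w t) : ∫⁻ t in s, ENNReal.ofReal (w t) ∂μ ≠ 0 := fun h => by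
  rw [setLIntegral_eq_zero_iff' hs hw.ennreal_ofReal] at h
  refine hμs (measure_eq_zero_iff_ae_notMem.2 (h.mono fun t ht hts => ?_))
  exact (ENNReal.ofReal_pos.2 (hw0 t hts)).ne' (ht hts)

variable {μ : Measure ℝ}

theorem var_le_integral_sub_sq (g : ℝ → ℝ) (s : ℝ) : Var μ g ≤ ∫ x, (g x - s) ^ 2 ∂μ :=
  ciInf_le ⟨0, forall_mem_range.2 fun _ => integral_nonneg fun _ => sq_nonneg _⟩ s

theorem integral_sq_le_var [IsFiniteMeasure μ] {g : ℝ → ℝ} (hg : Integrable g μ)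
    (hg2 : Integrable (fun x => g x ^ 2) μ) (hmean : ∫ x, g x ∂μ = 0) :
    ∫ x, g x ^ 2 ∂μ ≤ Var μ g := le_ciInf fun s => by
  have hlin : Integrable (fun x => 2 * s * g x) μ := hg.const_mul _
  have hsub : Integrable (fun x => g x ^ 2 - 2 * s * g x) μ := hg2.sub hlin
  calc ∫ x, g x ^ 2 ∂μ ≤ ∫ x, g x ^ 2 ∂μ - ∫ x, 2 * s * g x ∂μ + ∫ _, s ^ 2 ∂μ := by
        rw [integral_const_mul, hmean, mul_zero, sub_zero]
        exact le_add_of_nonneg_right (integral_nonneg fun _ => sq_nonneg s)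
    _ = ∫ x, (g x ^ 2 - 2 * s * g x + s ^ 2) ∂μ := by
        rw [← integral_sub hg2 hlin, ← integral_add hsub (integrable_const _)]
    _ = ∫ x, (g x - s) ^ 2 ∂μ := by
        congr with x
        ring

theorem var_smul_measure (c : ENNReal) (g : ℝ → ℝ) : Var (c • μ) g = c.toReal * Var μ g := by
  simp only [Var, integral_smul_measure, smul_eq_mul,
    Real.mul_iInf_of_nonneg ENNReal.toReal_nonneg]

theorem poincareOn_smul_measure {c : ENNReal} (hc0 : c ≠ 0) (hc : c ≠ ⊤) {s : Set ℝ} {C : ℝ} :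
    PoincareOn (c • μ) s C ↔ PoincareOn μ s C := by
  simp only [PoincareOn, integrable_smul_measure hc0 hc, var_smul_measure, integral_smul_measure,
    smul_eq_mul, mul_left_comm C, mul_le_mul_iff_right₀ (ENNReal.toReal_pos hc0 hc)]

end Measure

/-- The measure `w(t) dt` on `[a, b]`. It is left unnormalised, since Poincaré constants do not
change when the measure is scaled. -/
noncomputable def weightedVolume (w : ℝ → ℝ) (a b : ℝ) : Measure ℝ :=
  (volume.restrict (Icc a b)).withDensity fun t => ENNReal.ofReal (w t)

/-- `(u, u')` solves the Sturm–Liouville problem `(w u')' = -lam w u` on `[a, b]` with Neumann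
boundary conditions. For `w = exp (-V)` the equation is `u'' - V' u' = -lam u`; in divergence form
it involves no derivative of `w`. -/
structure IsNeumannSol (w : ℝ → ℝ) (a b lam : ℝ) (u u' : ℝ → ℝ) : Prop where
  hasDerivAt : ∀ t ∈ Icc a b, HasDerivAt u (u' t) t
  hasDerivAt_flux : ∀ t ∈ Icc a b, HasDerivAt (fun s => u' s * w s) (-lam * (u t * w t)) t
  deriv_left : u' a = 0
  deriv_right : u' b = 0

/-- The quantity `g² w u' / u` differentiated in Picone's identity. At a zero of `u` it takes the
value `0`, which is the correct limit when the zero is simple and `g` vanishes there. -/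
noncomputable def picone (w u u' g : ℝ → ℝ) (t : ℝ) : ℝ := g t ^ 2 * (u' t * w t) / u t

section SturmLiouville

variable {a b lam : ℝ} {w u u' g g' : ℝ → ℝ}

theorem isFiniteMeasure_weightedVolume (hw : ContinuousOn w (Icc a b)) :
    IsFiniteMeasure (weightedVolume w a b) :=
  isFiniteMeasure_withDensity_ofReal hw.integrableOn_Icc.hasFiniteIntegral

theorem integral_weightedVolume (hab : a ≤ b) (hw : ContinuousOn w (Icc a b))
    (hw0 : ∀ t ∈ Icc a b, 0 ≤ w t) (g : ℝ → ℝ) :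
    ∫ x, g x ∂weightedVolume w a b = ∫ x in a..b, g x * w x := by
  rw [weightedVolume, integral_withDensity_eq_integral_toReal_smul₀
    (hw.aemeasurable measurableSet_Icc).ennreal_ofReal
    (Eventually.of_forall fun _ => ENNReal.ofReal_lt_top),
    intervalIntegral.integral_of_le hab, ← integral_Icc_eq_integral_Ioc]
  refine setIntegral_congr_fun measurableSet_Icc fun x hx => ?_
  simp only [ENNReal.toReal_ofReal (hw0 x hx), smul_eq_mul, mul_comm]

theorem integrable_weightedVolume_iff (hw : ContinuousOn w (Icc a b))
    (hw0 : ∀ t ∈ Icc a b, 0 ≤ w t) :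
    Integrable g (weightedVolume w a b) ↔ IntegrableOn (fun x => g x * w x) (Icc a b) := by
  rw [weightedVolume, integrable_withDensity_iff_integrable_smul₀'
    (hw.aemeasurable measurableSet_Icc).ennreal_ofReal
    (Eventually.of_forall fun _ => ENNReal.ofReal_lt_top)]
  refine integrableOn_congr_fun (fun x hx => ?_) measurableSet_Icc
  simp only [ENNReal.toReal_ofReal (hw0 x hx), smul_eq_mul, mul_comm]

theorem exists_abs_le_of_integrableOn_deriv_sq_mul (hw : ContinuousOn w (Icc a b))
    (hw0 : ∀ t ∈ Icc a b, 0 < w t) (hg : ∀ x ∈ Ioo a b, HasDerivAt g (g' x) x)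
    (hg' : IntegrableOn (fun x => g' x ^ 2 * w x) (Icc a b)) :
    ∃ M, ∀ x ∈ Icc a b, |g x| ≤ M := by
  have hg'2 : IntegrableOn (fun x => g' x ^ 2) (Icc a b) :=
    (hg'.mul_continuousOn (hw.inv₀ fun t ht => (hw0 t ht).ne') isCompact_Icc).congr_fun
      (fun x hx => mul_inv_cancel_right₀ (hw0 x hx).ne' _) measurableSet_Icc
  have hmemLp : MemLp g' 2 (volume.restrict (Ioo a b)) :=
    (memLp_two_iff_integrable_sq
      (aestronglyMeasurable_restrict_of_hasDerivAt measurableSet_Ioo hg)).2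
      (hg'2.mono_set Ioo_subset_Icc_self)
  exact exists_norm_le_of_hasDerivAt_of_integrableOn hg (hmemLp.integrable one_le_two)

theorem integrableOn_sq_mul_of_abs_le (hw : ContinuousOn w (Icc a b))
    (hg : ContinuousOn g (Ioo a b)) {M : ℝ} (hM : ∀ x ∈ Ioo a b, |g x| ≤ M) :
    IntegrableOn (fun x => g x ^ 2 * w x) (Icc a b) := by
  have hg2 : IntegrableOn (fun x => g x ^ 2) (Ioo a b) :=
    IntegrableOn.of_bound measure_Ioo_lt_top
      ((hg.pow 2).aestronglyMeasurable measurableSet_Ioo) (M ^ 2) <|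
      (ae_restrict_mem measurableSet_Ioo).mono fun x hx => by
        rw [norm_pow]
        exact pow_le_pow_left₀ (norm_nonneg _) (hM x hx) 2
  rw [← integrableOn_Icc_iff_integrableOn_Ioo] at hg2
  exact hg2.mul_continuousOn hw isCompact_Icc

namespace IsNeumannSol

theorem mono (hu : IsNeumannSol w a b lam u u') {c d : ℝ} (hsub : Icc c d ⊆ Icc a b)
    (hc : u' c = 0) (hd : u' d = 0) : IsNeumannSol w c d lam u u' :=
  ⟨fun t ht => hu.hasDerivAt t (hsub ht), fun t ht => hu.hasDerivAt_flux t (hsub ht), hc, hd⟩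

theorem continuousOn (hu : IsNeumannSol w a b lam u u') : ContinuousOn u (Icc a b) :=
  HasDerivAt.continuousOn hu.hasDerivAt

theorem continuousOn_flux (hu : IsNeumannSol w a b lam u u') :
    ContinuousOn (fun t => u' t * w t) (Icc a b) :=
  HasDerivAt.continuousOn hu.hasDerivAt_flux

theorem continuousOn_deriv_sq_mul (hw : ContinuousOn w (Icc a b)) (hw0 : ∀ t ∈ Icc a b, 0 < w t)
    (hu : IsNeumannSol w a b lam u u') : ContinuousOn (fun t => u' t ^ 2 * w t) (Icc a b) :=
  ((hu.continuousOn_flux.pow 2).div hw fun t ht => (hw0 t ht).ne').congr fun t ht => by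
    have := (hw0 t ht).ne'
    simp only [Pi.pow_apply, Pi.div_apply]
    field_simp

theorem integral_mul_weight_eq_zero (hab : a ≤ b) (hw : ContinuousOn w (Icc a b))
    (hlam : lam ≠ 0) (hu : IsNeumannSol w a b lam u u') : ∫ x in a..b, u x * w x = 0 := by
  have hflux := intervalIntegral.integral_eq_sub_of_hasDerivAt
    (fun t ht => hu.hasDerivAt_flux t (uIcc_of_le hab ▸ ht))
    ((continuousOn_const.mul (hu.continuousOn.mul hw)).intervalIntegrable_of_Icc hab)
  simpa [hu.deriv_left, hu.deriv_right, hlam] using hflux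

theorem integral_deriv_sq_mul_weight (hab : a ≤ b) (hw : ContinuousOn w (Icc a b))
    (hw0 : ∀ t ∈ Icc a b, 0 < w t) (hu : IsNeumannSol w a b lam u u') :
    ∫ x in a..b, u' x ^ 2 * w x = lam * ∫ x in a..b, u x ^ 2 * w x := by
  have hu'2 : IntervalIntegrable (fun x => u' x ^ 2 * w x) volume a b :=
    (hu.continuousOn_deriv_sq_mul hw hw0).intervalIntegrable_of_Icc hab
  have hu2 : IntervalIntegrable (fun x => lam * (u x ^ 2 * w x)) volume a b :=
    (continuousOn_const.mul ((hu.continuousOn.pow 2).mul hw)).intervalIntegrable_of_Icc hab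
  have hderiv : ∀ t ∈ uIcc a b, HasDerivAt (fun s => u s * (u' s * w s))
      (u' t ^ 2 * w t - lam * (u t ^ 2 * w t)) t := fun t ht => by
    rw [uIcc_of_le hab] at ht
    exact ((hu.hasDerivAt t ht).mul (hu.hasDerivAt_flux t ht)).congr_deriv (by ring)
  have hparts := intervalIntegral.integral_eq_sub_of_hasDerivAt hderiv (hu'2.sub hu2)
  simp only [hu.deriv_left, hu.deriv_right, zero_mul, mul_zero, sub_zero] at hparts
  rwa [intervalIntegral.integral_sub hu'2 hu2, intervalIntegral.integral_const_mul,
    sub_eq_zero] at hparts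

theorem exists_eq_zero (hab : a < b) (hw0 : ∀ t ∈ Icc a b, w t ≠ 0) (hlam : lam ≠ 0)
    (hu : IsNeumannSol w a b lam u u') : ∃ c ∈ Ioo a b, u c = 0 := by
  obtain ⟨c, hc, hflux⟩ := exists_hasDerivAt_eq_zero hab hu.continuousOn_flux
    (by simp only [hu.deriv_left, hu.deriv_right, zero_mul])
    fun t ht => hu.hasDerivAt_flux t (Ioo_subset_Icc_self ht)
  exact ⟨c, hc, by simpa [hlam, hw0 c (Ioo_subset_Icc_self hc)] using hflux⟩

-- At a double zero `c > a`, `u` would also solve the Neumann problem on `[a, c]`, hence vanish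
-- again inside that interval.
theorem deriv_ne_zero_of_eq_zero (hab : a < b) (hw0 : ∀ t ∈ Icc a b, w t ≠ 0) (hlam : lam ≠ 0)
    (hu : IsNeumannSol w a b lam u u') (hzero : {x ∈ Icc a b | u x = 0}.Subsingleton) {c : ℝ}
    (hc : c ∈ Icc a b) (huc : u c = 0) : u' c ≠ 0 := fun hu'c => by
  have no_zero : ∀ x ∈ Icc a b, x ≠ c → u x ≠ 0 := fun x hx hxc hux =>
    hxc (hzero ⟨hx, hux⟩ ⟨hc, huc⟩)
  rcases hc.1.eq_or_lt with rfl | hac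
  · obtain ⟨x, hx, hux⟩ := hu.exists_eq_zero hab hw0 hlam
    exact no_zero x (Ioo_subset_Icc_self hx) hx.1.ne' hux
  · have hsub : Icc a c ⊆ Icc a b := Icc_subset_Icc_right hc.2
    obtain ⟨x, hx, hux⟩ := (hu.mono hsub hu.deriv_left hu'c).exists_eq_zero hac
      (fun t ht => hw0 t (hsub ht)) hlam
    exact no_zero x (hsub (Ioo_subset_Icc_self hx)) hx.2.ne hux

theorem hasDerivAt_picone (hu : IsNeumannSol w a b lam u u') {x : ℝ} (hx : x ∈ Icc a b)
    (hg : HasDerivAt g (g' x) x) (hux : u x ≠ 0) :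
    HasDerivAt (picone w u u' g) (g' x ^ 2 * w x - lam * (g x ^ 2 * w x) -
      (g' x - g x * u' x / u x) ^ 2 * w x) x := by
  refine (((hg.pow 2).mul (hu.hasDerivAt_flux x hx)).div (hu.hasDerivAt x hx) hux).congr_deriv ?_
  simp only [Pi.mul_apply, Pi.pow_apply]
  field_simp
  ring

theorem exists_hasDerivAt_picone_le (hu : IsNeumannSol w a b lam u u') {x : ℝ}
    (hx : x ∈ Icc a b) (hwx : 0 ≤ w x) (hg : HasDerivAt g (g' x) x) (hu' : u x = 0 → u' x ≠ 0)
    (hgx : u x = 0 → g x = 0) :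
    ∃ D ≤ g' x ^ 2 * w x - lam * (g x ^ 2 * w x), HasDerivAt (picone w u u' g) D x := by
  by_cases hux : u x = 0
  · refine ⟨_, le_of_eq ?_, hasDerivAt_sq_mul_div_of_eq_zero (hu.hasDerivAt x hx) hg
      (hu.hasDerivAt_flux x hx).continuousAt hux (hu' hux) (hgx hux)⟩
    have := hu' hux
    rw [hgx hux]
    field_simp
    ring
  · exact ⟨_, sub_le_self _ (by positivity), hu.hasDerivAt_picone hx hg hux⟩

theorem continuousWithinAt_picone_of_deriv_eq_zero (hu : IsNeumannSol w a b lam u u') {x M : ℝ}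
    (hx : x ∈ Icc a b) (hux : u x ≠ 0) (hu'x : u' x = 0) (hM : ∀ t ∈ Icc a b, |g t| ≤ M) :
    ContinuousWithinAt (picone w u u' g) (Icc a b) x := by
  have hflux : Tendsto (fun t => u' t * w t / u t) (𝓝[Icc a b] x) (𝓝 0) := by
    have hdiv := (hu.hasDerivAt_flux x hx).continuousAt.div (hu.hasDerivAt x hx).continuousAt hux
    rw [ContinuousAt, Pi.div_apply, hu'x, zero_mul, zero_div] at hdiv
    exact hdiv.mono_left nhdsWithin_le_nhds
  have hg2 : ∀ᶠ t in 𝓝[Icc a b] x, |g t ^ 2| ≤ M ^ 2 :=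
    eventually_nhdsWithin_of_forall fun t ht => by
      rw [abs_pow]
      exact pow_le_pow_left₀ (abs_nonneg _) (hM t ht) 2
  have hlim := bdd_le_mul_tendsto_zero' _ hg2 hflux
  have hpicone : picone w u u' g = fun t => g t ^ 2 * (u' t * w t / u t) :=
    funext fun t => mul_div_assoc _ _ _
  simpa only [ContinuousWithinAt, hpicone, hu'x, zero_mul, zero_div, mul_zero] using hlim

theorem integral_sq_le_integral_deriv_sq (hab : a ≤ b) (hw : ContinuousOn w (Icc a b))
    (hw0 : ∀ t ∈ Icc a b, 0 < w t) (hu : IsNeumannSol w a b lam u u')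
    (hsimple : ∀ x ∈ Icc a b, u x = 0 → u' x ≠ 0) (hgu : ∀ x ∈ Icc a b, u x = 0 → g x = 0)
    (hg : ∀ x ∈ Ioo a b, HasDerivAt g (g' x) x)
    (hg' : IntegrableOn (fun x => g' x ^ 2 * w x) (Icc a b)) :
    lam * ∫ x in a..b, g x ^ 2 * w x ≤ ∫ x in a..b, g' x ^ 2 * w x := by
  obtain ⟨M, hM⟩ := exists_abs_le_of_integrableOn_deriv_sq_mul hw hw0 hg hg'
  have hg2 : IntegrableOn (fun x => lam * (g x ^ 2 * w x)) (Icc a b) :=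
    (integrableOn_sq_mul_of_abs_le hw (HasDerivAt.continuousOn hg)
      fun x hx => hM x (Ioo_subset_Icc_self hx)).const_mul lam
  choose! D hDle hD using fun x (hx : x ∈ Ioo a b) =>
    have hx' := Ioo_subset_Icc_self hx
    hu.exists_hasDerivAt_picone_le hx' (hw0 x hx').le (hg x hx) (hsimple x hx') (hgu x hx')
  have hend : ∀ x ∈ Icc a b, u' x = 0 → ContinuousWithinAt (picone w u u' g) (Icc a b) x :=
    fun x hx hu'x => hu.continuousWithinAt_picone_of_deriv_eq_zero hx
      (fun hux => hsimple x hx hux hu'x) hu'x hM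
  have hcont : ContinuousOn (picone w u u' g) (Icc a b) := fun x hx => by
    rcases eq_endpoints_or_mem_Ioo_of_mem_Icc hx with rfl | rfl | hx'
    · exact hend _ hx hu.deriv_left
    · exact hend _ hx hu.deriv_right
    · exact (hD x hx').continuousAt.continuousWithinAt
  have hFTC : picone w u u' g b - picone w u u' g a ≤
      ∫ x in a..b, (g' x ^ 2 * w x - lam * (g x ^ 2 * w x)) :=
    intervalIntegral.sub_le_integral_of_hasDeriv_right_of_le hab hcont
      (fun x hx => (hD x hx).hasDerivWithinAt) (hg'.sub hg2) hDle
  rw [intervalIntegral.integral_sub ((intervalIntegrable_iff_integrableOn_Icc_of_le hab).2 hg')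
    ((intervalIntegrable_iff_integrableOn_Icc_of_le hab).2 hg2),
    intervalIntegral.integral_const_mul] at hFTC
  simp only [picone, hu.deriv_left, hu.deriv_right, zero_mul, mul_zero, zero_div, sub_zero] at hFTC
  exact sub_nonneg.1 hFTC

theorem poincareOn_one_div (hab : a < b) (hw : ContinuousOn w (Icc a b))
    (hw0 : ∀ t ∈ Icc a b, 0 < w t) (hlam : 0 < lam) (hu : IsNeumannSol w a b lam u u')
    (hzero : {x ∈ Icc a b | u x = 0}.Subsingleton) :
    PoincareOn (weightedVolume w a b) (Ioo a b) (1 / lam) := by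
  intro g g' hg _ hg'
  have hw0' : ∀ t ∈ Icc a b, 0 ≤ w t := fun t ht => (hw0 t ht).le
  have hw_ne : ∀ t ∈ Icc a b, w t ≠ 0 := fun t ht => (hw0 t ht).ne'
  obtain ⟨c, hc, huc⟩ := hu.exists_eq_zero hab hw_ne hlam.ne'
  have hvanish : ∀ x ∈ Icc a b, u x = 0 → g x - g c = 0 := fun x hx hux => by
    rw [hzero ⟨hx, hux⟩ ⟨Ioo_subset_Icc_self hc, huc⟩, sub_self]
  have hineq := hu.integral_sq_le_integral_deriv_sq hab.le hw hw0
    (fun x hx => hu.deriv_ne_zero_of_eq_zero hab hw_ne hlam.ne' hzero hx) hvanish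
    (fun x hx => (hg x hx).sub_const _) ((integrable_weightedVolume_iff hw hw0').1 hg')
  calc Var (weightedVolume w a b) g ≤ ∫ x, (g x - g c) ^ 2 ∂weightedVolume w a b :=
        var_le_integral_sub_sq g (g c)
    _ ≤ 1 / lam * ∫ x, g' x ^ 2 ∂weightedVolume w a b := by
        rwa [integral_weightedVolume hab.le hw hw0', integral_weightedVolume hab.le hw hw0',
          one_div_mul_eq_div, le_div_iff₀' hlam]

end IsNeumannSol

theorem PoincareOn.one_div_le {C : ℝ} (hC : PoincareOn (weightedVolume w a b) (Ioo a b) C)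
    (hab : a < b) (hw : ContinuousOn w (Icc a b)) (hw0 : ∀ t ∈ Icc a b, 0 < w t)
    (hlam : 0 < lam) (hu : IsNeumannSol w a b lam u u') (hne : ∃ x ∈ Icc a b, u x ≠ 0) :
    1 / lam ≤ C := by
  have hw0' : ∀ t ∈ Icc a b, 0 ≤ w t := fun t ht => (hw0 t ht).le
  have := isFiniteMeasure_weightedVolume hw
  have integrable_of_continuousOn : ∀ {h : ℝ → ℝ}, ContinuousOn (fun x => h x * w x) (Icc a b) →
      Integrable h (weightedVolume w a b) := fun hh =>
    (integrable_weightedVolume_iff hw hw0').2 hh.integrableOn_Icc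
  have hu2w : ContinuousOn (fun x => u x ^ 2 * w x) (Icc a b) := (hu.continuousOn.pow 2).mul hw
  have hu2 := integrable_of_continuousOn (h := fun x => u x ^ 2) hu2w
  have hpos : 0 < ∫ x in a..b, u x ^ 2 * w x := by
    obtain ⟨x, hx, hux⟩ := hne
    exact intervalIntegral.integral_pos hab hu2w
      (fun t ht => mul_nonneg (sq_nonneg _) (hw0' t (Ioc_subset_Icc_self ht)))
      ⟨x, hx, mul_pos (sq_pos_of_ne_zero hux) (hw0 x hx)⟩
  have hmean : ∫ x, u x ∂weightedVolume w a b = 0 := by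
    rw [integral_weightedVolume hab.le hw hw0', hu.integral_mul_weight_eq_zero hab.le hw hlam.ne']
  have hineq : ∫ x in a..b, u x ^ 2 * w x ≤ C * (lam * ∫ x in a..b, u x ^ 2 * w x) := by
    rw [← hu.integral_deriv_sq_mul_weight hab.le hw hw0, ← integral_weightedVolume hab.le hw hw0',
      ← integral_weightedVolume hab.le hw hw0']
    exact (integral_sq_le_var (integrable_of_continuousOn (hu.continuousOn.mul hw)) hu2 hmean).trans
      (hC u u' (fun x hx => hu.hasDerivAt x (Ioo_subset_Icc_self hx)) hu2
        (integrable_of_continuousOn (hu.continuousOn_deriv_sq_mul hw hw0)))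
  rw [div_le_iff₀ hlam]
  exact le_of_mul_le_mul_right (by rwa [one_mul, mul_assoc]) hpos

end SturmLiouville

theorem IsSol.isNeumannSol {a b lam : ℝ} {V V' u u' : ℝ → ℝ} (hu : IsSol V' a b lam u u')
    (hV : ∀ t ∈ Icc a b, HasDerivAt V (V' t) t) (ha : u' a = 0) (hb : u' b = 0) :
    IsNeumannSol (fun t => exp (-V t)) a b lam u u' where
  hasDerivAt := hu.1
  hasDerivAt_flux t ht := ((hu.2 t ht).mul (hV t ht).neg.exp).congr_deriv <| by
    simp only [Pi.neg_apply]
    ring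
  deriv_left := ha
  deriv_right := hb

theorem stmt17_general {a b : ℝ} (hab : a < b) {V V' : ℝ → ℝ}
    (hV : ∀ t ∈ Icc a b, HasDerivAt V (V' t) t) {μ : Measure ℝ}
    (hμ : μ = (∫⁻ t in Icc a b, ENNReal.ofReal (exp (-V t)))⁻¹ •
      weightedVolume (fun t => exp (-V t)) a b)
    {lam : ℝ} (hlam : 0 < lam) {f f' : ℝ → ℝ} (hf : IsSol V' a b lam f f')
    (hzero : {x ∈ Icc a b | f x = 0}.Subsingleton) (ha : f' a = 0) (hb : f' b = 0) :
    IsLeast {l | 0 < l ∧ IsNeumannEig V' a b l} lam ∧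
      IsLeast {C | PoincareOn μ (Ioo a b) C} (1 / lam) := by
  have hw : ContinuousOn (fun t => exp (-V t)) (Icc a b) := (HasDerivAt.continuousOn hV).neg.rexp
  have hw0 : ∀ t ∈ Icc a b, 0 < exp (-V t) := fun t _ => exp_pos _
  have hZ : ∫⁻ t in Icc a b, ENNReal.ofReal (exp (-V t)) ≠ 0 :=
    setLIntegral_ofReal_ne_zero measurableSet_Icc (by simpa using hab)
      (hw.aemeasurable measurableSet_Icc) hw0
  have hμ_iff : ∀ C, PoincareOn μ (Ioo a b) C ↔
      PoincareOn (weightedVolume (fun t => exp (-V t)) a b) (Ioo a b) C := fun C => by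
    rw [hμ, poincareOn_smul_measure (ENNReal.inv_ne_zero.2 hw.integrableOn_Icc.lintegral_lt_top.ne)
      (ENNReal.inv_ne_top.2 hZ)]
  have hP : PoincareOn μ (Ioo a b) (1 / lam) :=
    (hμ_iff _).2 ((hf.isNeumannSol hV ha hb).poincareOn_one_div hab hw hw0 hlam hzero)
  have one_div_le : ∀ {l C}, 0 < l → IsNeumannEig V' a b l → PoincareOn μ (Ioo a b) C →
      1 / l ≤ C := fun hl ⟨u, u', hu, hne, hua, hub⟩ hC =>
    ((hμ_iff _).1 hC).one_div_le hab hw hw0 hl (hu.isNeumannSol hV hua hub) hne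
  have hne : ∃ x ∈ Icc a b, f x ≠ 0 := by
    by_contra! hf0
    have ha_mem := left_mem_Icc.2 hab.le
    have hb_mem := right_mem_Icc.2 hab.le
    exact hab.ne (hzero ⟨ha_mem, hf0 a ha_mem⟩ ⟨hb_mem, hf0 b hb_mem⟩)
  have heig : IsNeumannEig V' a b lam := ⟨f, f', hf, hne, ha, hb⟩
  exact ⟨⟨⟨hlam, heig⟩, fun l hl => (one_div_le_one_div hl.1 hlam).1 (one_div_le hl.1 hl.2 hP)⟩,
    hP, fun C hC => one_div_le hlam heig hC⟩

/-- a strictly monotonic Neumann eigenfunction with eigenvalue `λ > 0`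
realizes the spectral gap, so `C_P(μ) = 1/λ`. -/
theorem stmt17 (a b : ℝ) (hab : a < b) (V V' V'' : ℝ → ℝ)
    (hV' : ∀ t ∈ Set.Icc a b, HasDerivAt V (V' t) t)
    (hV'' : ∀ t ∈ Set.Icc a b, HasDerivAt V' (V'' t) t)
    (hV''c : ContinuousOn V'' (Set.Icc a b))
    (μ : Measure ℝ)
    (hμ : μ = (∫⁻ t in Set.Icc a b, ENNReal.ofReal (Real.exp (-V t)))⁻¹ •
      (MeasureTheory.volume.restrict (Set.Icc a b)).withDensity
        fun t => ENNReal.ofReal (Real.exp (-V t)))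
    (lam : ℝ) (hlam : 0 < lam) (f f' : ℝ → ℝ)
    (hsol : IsSol V' a b lam f f')
    (hmonot : StrictMonoOn f (Set.Icc a b) ∨ StrictAntiOn f (Set.Icc a b))
    (hfa : f' a = 0) (hfb : f' b = 0) :
    IsNeumannEig V' a b lam ∧
    (∀ lam' : ℝ, 0 < lam' → IsNeumannEig V' a b lam' → lam ≤ lam') ∧
    PoincareOn μ (Set.Ioo a b) (1/lam) ∧
    (∀ C, 0 ≤ C → PoincareOn μ (Set.Ioo a b) C → 1/lam ≤ C) := by
  have hinj : InjOn f (Icc a b) := hmonot.elim StrictMonoOn.injOn StrictAntiOn.injOn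
  obtain ⟨hgap, hCP⟩ := stmt17_general hab hV' hμ hlam hsol
    (fun x hx y hy => hinj hx.1 hy.1 (hx.2.trans hy.2.symm)) hfa hfb
  exact ⟨hgap.1.2, fun l hl h => hgap.2 ⟨hl, h⟩, hCP.1, fun C _ hC => hCP.2 hC⟩
end

section
/- Let μ be a probability measure on ℝ with dμ(x) = e^{−V(x)} 1_Ω(x) dx on an open interval Ω, with V twice continuously differentiable. If there exists r > 0 such that V''(x) ≥ r for all x ∈ Ω, then C_P(μ) ≤ 1/r. -/
open MeasureTheory Real Set

/-! Let `p` minimise `V` on a compact interval `[c, d] ⊆ Ω`. Strong convexity gives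
`(x - p) V'(x) ≥ r (x - p)²`, where `V'` is the right derivative. With
`q(x) = (f x - f p) / (x - p)`, the function `H(x) = (x - p) q(x)² e^{-V(x)}` satisfies
`H' = (2 q f' - q² - q² (x - p) V') e^{-V} ≤ (f'² - r (f - f p)²) e^{-V}`,
and `H(c) ≤ 0 ≤ H(d)`, so integration over `[c, d]` gives the weighted inequality centred at `f p`.
When `V` has no minimiser in `Ω`, the centre moves as `[c, d]` increases to `Ω`. However, the
variances of the restricted measures converge, and the constant `1 / r` does not depend on the
interval. -/

open Filter Topology

section StrongConvexity

theorem add_le_of_uniformConvexOn_of_isMinOn {E : Type*} [NormedAddCommGroup E] [NormedSpace ℝ E]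
    {s : Set E} {φ : ℝ → ℝ} {f : E → ℝ} {p x : E} (hf : UniformConvexOn s φ f)
    (hmin : IsMinOn f s p) (hp : p ∈ s) (hx : x ∈ s) : f p + φ ‖x - p‖ ≤ f x := by
  have hbound : ∀ a ∈ Ioo (0 : ℝ) 1, f p + (1 - a) * φ ‖x - p‖ ≤ f x := by
    intro a ha
    have ha' : 0 ≤ 1 - a := sub_nonneg.2 ha.2.le
    have hconv := hf.2 hx hp ha.1.le ha' (add_sub_cancel a 1)
    have hle := isMinOn_iff.1 hmin _ (hf.1 hx hp ha.1.le ha' (add_sub_cancel a 1))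
    simp only [smul_eq_mul] at hconv
    refine le_of_mul_le_mul_left ?_ ha.1
    linarith
  have hlim : Tendsto (fun a : ℝ => f p + (1 - a) * φ ‖x - p‖) (𝓝[>] 0)
      (𝓝 (f p + (1 - 0) * φ ‖x - p‖)) :=
    Continuous.continuousWithinAt (by fun_prop)
  rw [sub_zero, one_mul] at hlim
  exact le_of_tendsto hlim (eventually_of_mem (Ioo_mem_nhdsGT one_pos) hbound)

theorem add_rightDeriv_mul_sub_le_of_convexOn {s : Set ℝ} {f : ℝ → ℝ} {x y : ℝ}
    (hf : ConvexOn ℝ s f) (hx : x ∈ interior s) (hy : y ∈ s) :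
    f x + derivWithin f (Ioi x) x * (y - x) ≤ f y := by
  rcases lt_trichotomy x y with hxy | rfl | hyx
  · have hslope := hf.rightDeriv_le_slope_of_mem_interior hx hy hxy
    rw [slope_def_field, le_div_iff₀ (sub_pos.2 hxy)] at hslope
    linarith
  · simp
  · have hslope := (hf.slope_le_leftDeriv_of_mem_interior hy hx hyx).trans
      (hf.leftDeriv_le_rightDeriv_of_mem_interior hx)
    rw [slope_def_field, div_le_iff₀ (sub_pos.2 hyx)] at hslope
    linarith

variable {s : Set ℝ} {r : ℝ} {V : ℝ → ℝ}

theorem strongConvexOn_iff_convexOn_sub_mul_sq :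
    StrongConvexOn s r V ↔ ConvexOn ℝ s fun x => V x - r / 2 * x ^ 2 := by
  simp only [strongConvexOn_iff_convex, norm_eq_abs, sq_abs]

theorem hasDerivAt_half_mul_sq (r x : ℝ) : HasDerivAt (fun y => r / 2 * y ^ 2) (r * x) x :=
  ((hasDerivAt_pow 2 x).const_mul (r / 2)).congr_deriv (by norm_num; ring)

theorem strongConvexOn_of_le_hasDerivAt2 (hs : Convex ℝ s) {V' V'' : ℝ → ℝ}
    (hV' : ∀ x ∈ s, HasDerivAt V (V' x) x) (hV'' : ∀ x ∈ s, HasDerivAt V' (V'' x) x)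
    (hr : ∀ x ∈ s, r ≤ V'' x) : StrongConvexOn s r V := by
  have hd : ∀ x ∈ s, HasDerivAt (fun y => V y - r / 2 * y ^ 2) (V' x - r * x) x := fun x hx =>
    (hV' x hx).sub (hasDerivAt_half_mul_sq r x)
  have hdd : ∀ x ∈ s, HasDerivAt (fun y => V' y - r * y) (V'' x - r) x := fun x hx =>
    (hV'' x hx).sub (hasDerivAt_const_mul r)
  rw [strongConvexOn_iff_convexOn_sub_mul_sq]
  exact convexOn_of_hasDerivWithinAt2_nonneg hs (HasDerivAt.continuousOn hd)
    (fun x hx => (hd x (interior_subset hx)).hasDerivWithinAt)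
    (fun x hx => (hdd x (interior_subset hx)).hasDerivWithinAt)
    (fun x hx => sub_nonneg.2 (hr x (interior_subset hx)))

theorem exists_hasDerivWithinAt_Ioi_add_mul_sub_add_sq_le (hV : StrongConvexOn s r V) {x : ℝ}
    (hx : x ∈ interior s) :
    ∃ v, HasDerivWithinAt V v (Ioi x) x ∧
      ∀ y ∈ s, V x + v * (y - x) + r / 2 * (y - x) ^ 2 ≤ V y := by
  have hconv := strongConvexOn_iff_convexOn_sub_mul_sq.1 hV
  have hadd := (hconv.hasDerivWithinAt_rightDeriv_of_mem_interior hx).add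
    (hasDerivAt_half_mul_sq r x).hasDerivWithinAt
  simp only [Pi.add_def, sub_add_cancel] at hadd
  refine ⟨_, hadd, fun y hy => ?_⟩
  have htangent := add_rightDeriv_mul_sub_le_of_convexOn hconv hx hy
  linear_combination htangent

theorem exists_hasDerivWithinAt_Ioi_mul_sq_le_of_isMinOn (hV : StrongConvexOn s r V) {p x : ℝ}
    (hp : p ∈ s) (hmin : IsMinOn V s p) (hx : x ∈ interior s) :
    ∃ v, HasDerivWithinAt V v (Ioi x) x ∧ r * (x - p) ^ 2 ≤ (x - p) * v := by
  obtain ⟨v, hv, htangent⟩ := exists_hasDerivWithinAt_Ioi_add_mul_sub_add_sq_le hV hx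
  have hgrowth := add_le_of_uniformConvexOn_of_isMinOn hV hmin hp (interior_subset hx)
  rw [norm_eq_abs, sq_abs] at hgrowth
  exact ⟨v, hv, by linear_combination htangent p hp + hgrowth⟩

end StrongConvexity

section CompactInterval

theorem hasDerivAt_sub_mul_dslope_sq {f : ℝ → ℝ} {f' p x : ℝ} (hf : HasDerivAt f f' x) :
    HasDerivAt (fun y => (y - p) * dslope f p y ^ 2)
      (2 * dslope f p x * f' - dslope f p x ^ 2) x := by
  rcases eq_or_ne x p with rfl | hxp
  · have hcont : ContinuousAt (dslope f x) x := continuousAt_dslope_same.2 hf.differentiableAt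
    rw [hasDerivAt_iff_tendsto_slope]
    have hlim : Tendsto (fun y => dslope f x y ^ 2) (𝓝[≠] x) (𝓝 (dslope f x x ^ 2)) :=
      (hcont.pow 2).continuousWithinAt
    rw [dslope_same, hf.deriv] at hlim ⊢
    convert hlim.congr' ?_ using 2
    · ring
    · filter_upwards [self_mem_nhdsWithin] with y hy
      have : y - x ≠ 0 := sub_ne_zero.2 hy
      simp [slope_def_field, this]
  · have hxp' : x - p ≠ 0 := sub_ne_zero.2 hxp
    have hquot : HasDerivAt (fun y => (f y - f p) ^ 2 / (y - p)) _ x :=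
      ((hf.sub_const (f p)).pow 2).div ((hasDerivAt_id x).sub_const p) hxp'
    refine (hquot.congr_deriv ?_).congr_of_eventuallyEq ?_
    · simp only [dslope_of_ne f hxp, slope_def_field, Pi.pow_apply, Nat.cast_ofNat]
      field_simp
      ring
    · filter_upwards [eventually_ne_nhds hxp] with y hy
      have : y - p ≠ 0 := sub_ne_zero.2 hy
      rw [dslope_of_ne f hy, slope_def_field]
      field_simp

variable {c d p r : ℝ} {V f : ℝ → ℝ}

theorem exists_hasDerivWithinAt_Ioi_sub_mul_dslope_sq_mul_exp_neg_le {s : Set ℝ} {f' x : ℝ}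
    (hV : StrongConvexOn s r V) (hp : p ∈ s) (hmin : IsMinOn V s p) (hx : x ∈ interior s)
    (hf : HasDerivAt f f' x) :
    ∃ h, HasDerivWithinAt (fun y => (y - p) * dslope f p y ^ 2 * exp (-V y)) h (Ioi x) x ∧
      h ≤ f' ^ 2 * exp (-V x) - r * ((f x - f p) ^ 2 * exp (-V x)) := by
  obtain ⟨v, hv, hrv⟩ := exists_hasDerivWithinAt_Ioi_mul_sq_le_of_isMinOn hV hp hmin hx
  refine ⟨_, (hasDerivAt_sub_mul_dslope_sq hf).hasDerivWithinAt.mul hv.neg.exp, ?_⟩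
  have hdrift : r * ((x - p) * dslope f p x) ^ 2 ≤ (x - p) * v * dslope f p x ^ 2 := by
    linear_combination dslope f p x ^ 2 * hrv
  have hsq : 0 ≤ (f' - dslope f p x) ^ 2 := sq_nonneg _
  rw [← sub_smul_dslope f p x, smul_eq_mul]
  linear_combination exp (-V x) * (hdrift + hsq)

theorem mul_setIntegral_sq_sub_le_of_isMinOn {f' : ℝ → ℝ} (hVc : ContinuousOn V (Icc c d))
    (hV : StrongConvexOn (Icc c d) r V) (hp : p ∈ Icc c d) (hmin : IsMinOn V (Icc c d) p)
    (hf : ∀ x ∈ Icc c d, HasDerivAt f (f' x) x)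
    (hint : IntegrableOn (fun x => f' x ^ 2 * exp (-V x)) (Icc c d)) :
    r * ∫ x in Icc c d, (f x - f p) ^ 2 * exp (-V x) ≤
      ∫ x in Icc c d, f' x ^ 2 * exp (-V x) := by
  have hcd : c ≤ d := hp.1.trans hp.2
  have hfc : ContinuousOn f (Icc c d) := HasDerivAt.continuousOn hf
  have hfint : IntegrableOn (fun x => r * ((f x - f p) ^ 2 * exp (-V x))) (Icc c d) :=
    ContinuousOn.integrableOn_Icc (by fun_prop)
  set H : ℝ → ℝ := fun x => (x - p) * dslope f p x ^ 2 * exp (-V x)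
  have hHc : ContinuousOn H (Icc c d) := fun x hx =>
    (hasDerivAt_sub_mul_dslope_sq (hf x hx)).continuousAt.continuousWithinAt.mul
      (hVc x hx).neg.rexp
  have hHderiv : ∀ x ∈ Ioo c d, ∃ h, HasDerivWithinAt H h (Ioi x) x ∧
      h ≤ f' x ^ 2 * exp (-V x) - r * ((f x - f p) ^ 2 * exp (-V x)) := fun x hx =>
    exists_hasDerivWithinAt_Ioi_sub_mul_dslope_sq_mul_exp_neg_le hV hp hmin
      (by rwa [interior_Icc]) (hf x (Ioo_subset_Icc_self hx))
  choose! h hH hle using hHderiv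
  have hHd : 0 ≤ H d :=
    mul_nonneg (mul_nonneg (sub_nonneg.2 hp.2) (sq_nonneg _)) (exp_pos _).le
  have hHc_nonpos : H c ≤ 0 := mul_nonpos_of_nonpos_of_nonneg
    (mul_nonpos_of_nonpos_of_nonneg (sub_nonpos.2 hp.1) (sq_nonneg _)) (exp_pos _).le
  rw [← sub_nonneg, ← integral_const_mul, ← integral_sub hint hfint,
    integral_Icc_eq_integral_Ioc, ← intervalIntegral.integral_of_le hcd]
  exact (sub_nonneg.2 (hHc_nonpos.trans hHd)).trans
    (intervalIntegral.sub_le_integral_of_hasDeriv_right_of_le hcd hHc hH (hint.sub hfint) hle)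

end CompactInterval

section Variance

theorem integral_sub_const_sq {α : Type*} {m : MeasurableSpace α} {μ : Measure α}
    [IsFiniteMeasure μ] {f : α → ℝ} (hf : MemLp f 2 μ) (a : ℝ) :
    ∫ x, (f x - a) ^ 2 ∂μ =
      ∫ x, f x ^ 2 ∂μ - 2 * a * ∫ x, f x ∂μ + a ^ 2 * μ.real univ := by
  have hf1 : Integrable (fun x => 2 * a * f x) μ := (hf.integrable one_le_two).const_mul _
  have hf2 : Integrable (fun x => f x ^ 2) μ := hf.integrable_sq
  calc ∫ x, (f x - a) ^ 2 ∂μ = ∫ x, (f x ^ 2 - 2 * a * f x + a ^ 2) ∂μ := by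
        congr 1 with x
        ring
    _ = ∫ x, f x ^ 2 ∂μ - ∫ x, 2 * a * f x ∂μ + ∫ _, a ^ 2 ∂μ := by
        rw [integral_add (by fun_prop) (by fun_prop), integral_sub hf2 hf1]
    _ = _ := by rw [integral_const_mul, integral_const, smul_eq_mul, mul_comm (μ.real univ)]

variable {μ : Measure ℝ} {f : ℝ → ℝ}

theorem Var_le_integral_sub_sq (μ : Measure ℝ) (f : ℝ → ℝ) (a : ℝ) :
    Var μ f ≤ ∫ x, (f x - a) ^ 2 ∂μ :=
  ciInf_le ⟨0, forall_mem_range.2 fun _ => integral_nonneg fun _ => sq_nonneg _⟩ a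

@[simp]
theorem Var_zero_measure (f : ℝ → ℝ) : Var 0 f = 0 := by
  simp [Var]

theorem Var_eq_sub [IsFiniteMeasure μ] [NeZero μ] (hf : MemLp f 2 μ) :
    Var μ f = ∫ x, f x ^ 2 ∂μ - (∫ x, f x ∂μ) ^ 2 / μ.real univ := by
  have hM : 0 < μ.real univ := measureReal_univ_pos
  have hsq : ∀ a, ∫ x, (f x - a) ^ 2 ∂μ = ∫ x, f x ^ 2 ∂μ - (∫ x, f x ∂μ) ^ 2 / μ.real univ +
      μ.real univ * (a - (∫ x, f x ∂μ) / μ.real univ) ^ 2 := by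
    intro a
    rw [integral_sub_const_sq hf]
    field_simp
    ring
  refine le_antisymm ?_ (le_ciInf fun a => ?_)
  · exact (Var_le_integral_sub_sq μ f ((∫ x, f x ∂μ) / μ.real univ)).trans_eq (by simp [hsq])
  · rw [hsq]
    exact le_add_of_nonneg_right (by positivity)

theorem tendsto_Var_restrict_of_aecover [IsFiniteMeasure μ] (hf : MemLp f 2 μ) {ι : Type*}
    {l : Filter ι} [l.IsCountablyGenerated] {K : ι → Set ℝ} (hK : AECover μ l K) :
    Tendsto (fun i => Var (μ.restrict (K i)) f) l (𝓝 (Var μ f)) := by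
  rcases eq_zero_or_neZero μ with rfl | hμ
  · simp [tendsto_const_nhds]
  have hM : μ.real univ ≠ 0 := measureReal_univ_ne_zero
  have hmass : Tendsto (fun i => (μ.restrict (K i)).real univ) l (𝓝 (μ.real univ)) := by
    simpa using hK.integral_tendsto_of_countably_generated (integrable_const (1 : ℝ))
  have hmean := hK.integral_tendsto_of_countably_generated (hf.integrable one_le_two)
  have hsq := hK.integral_tendsto_of_countably_generated hf.integrable_sq
  rw [Var_eq_sub hf]
  refine (hsq.sub ((hmean.pow 2).div hmass hM)).congr' ?_
  filter_upwards [hmass.eventually_ne hM] with i hi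
  have : NeZero (μ.restrict (K i)) := ⟨fun h0 => hi (by simp [h0])⟩
  exact (Var_eq_sub (hf.restrict _)).symm

theorem PoincareOn.of_aecover [IsFiniteMeasure μ] {s : Set ℝ} {C : ℝ} (hC : 0 ≤ C) {ι : Type*}
    {l : Filter ι} [l.IsCountablyGenerated] [l.NeBot] {K : ι → Set ℝ} (hK : AECover μ l K)
    (hKs : ∀ i, K i ⊆ s) (hP : ∀ i, PoincareOn (μ.restrict (K i)) (K i) C) :
    PoincareOn μ s C := by
  intro f f' hf hf2 hf'2
  have hfm : AEStronglyMeasurable f μ := hK.aestronglyMeasurable fun i =>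
    (HasDerivAt.continuousOn fun x hx => hf x (hKs i hx)).aestronglyMeasurable (hK.measurableSet i)
  refine le_of_tendsto
    (tendsto_Var_restrict_of_aecover ((memLp_two_iff_integrable_sq hfm).2 hf2) hK)
    (Eventually.of_forall fun i => ?_)
  calc Var (μ.restrict (K i)) f
      ≤ C * ∫ x in K i, f' x ^ 2 ∂μ :=
        hP i f f' (fun x hx => hf x (hKs i hx)) hf2.restrict hf'2.restrict
    _ ≤ C * ∫ x, f' x ^ 2 ∂μ := mul_le_mul_of_nonneg_left
        (setIntegral_le_integral hf'2 (Eventually.of_forall fun _ => sq_nonneg _)) hC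

end Variance

section GibbsMeasure

/-- The (unnormalised) Gibbs measure `e^{-V} 1_s dx` of the potential `V` on the set `s`. -/
noncomputable def gibbsMeasure (s : Set ℝ) (V : ℝ → ℝ) : Measure ℝ :=
  (volume.restrict s).withDensity fun x => ENNReal.ofReal (exp (-V x))

variable {s t : Set ℝ} {V : ℝ → ℝ}

theorem withDensity_indicator_exp_neg (hs : MeasurableSet s) (V : ℝ → ℝ) :
    (volume.withDensity fun x => ENNReal.ofReal (s.indicator (fun y => exp (-V y)) x)) =
      gibbsMeasure s V := by
  rw [gibbsMeasure, ← withDensity_indicator hs]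
  congr 1 with x
  by_cases hx : x ∈ s <;> simp [hx]

theorem ae_mem_gibbsMeasure (hs : MeasurableSet s) (V : ℝ → ℝ) : ∀ᵐ x ∂gibbsMeasure s V, x ∈ s :=
  (withDensity_absolutelyContinuous _ _).ae_le (ae_restrict_mem hs)

theorem gibbsMeasure_restrict (ht : MeasurableSet t) (hts : t ⊆ s) (V : ℝ → ℝ) :
    (gibbsMeasure s V).restrict t = gibbsMeasure t V := by
  rw [gibbsMeasure, restrict_withDensity ht, Measure.restrict_restrict_of_subset hts, gibbsMeasure]

theorem aemeasurable_ofReal_exp_neg (hs : MeasurableSet s) (hV : ContinuousOn V s) :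
    AEMeasurable (fun x => ENNReal.ofReal (exp (-V x))) (volume.restrict s) :=
  (hV.neg.rexp.aemeasurable hs).ennreal_ofReal

theorem integral_gibbsMeasure (hs : MeasurableSet s) (hV : ContinuousOn V s) (g : ℝ → ℝ) :
    ∫ x, g x ∂gibbsMeasure s V = ∫ x in s, g x * exp (-V x) := by
  rw [gibbsMeasure, integral_withDensity_eq_integral_toReal_smul₀
    (aemeasurable_ofReal_exp_neg hs hV) (by simp)]
  simp only [ENNReal.toReal_ofReal (exp_pos _).le, smul_eq_mul, mul_comm]

theorem integrable_gibbsMeasure_iff (hs : MeasurableSet s) (hV : ContinuousOn V s) {g : ℝ → ℝ} :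
    Integrable g (gibbsMeasure s V) ↔ IntegrableOn (fun x => g x * exp (-V x)) s := by
  rw [gibbsMeasure, integrable_withDensity_iff_integrable_smul₀'
    (aemeasurable_ofReal_exp_neg hs hV) (by simp)]
  simp only [ENNReal.toReal_ofReal (exp_pos _).le, smul_eq_mul, mul_comm, IntegrableOn]

theorem poincareOn_gibbsMeasure_Icc {c d r : ℝ} (hcd : c ≤ d) (hr : 0 < r)
    (hVc : ContinuousOn V (Icc c d)) (hV : StrongConvexOn (Icc c d) r V) :
    PoincareOn (gibbsMeasure (Icc c d) V) (Icc c d) (1 / r) := by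
  intro f f' hf _ hf'2
  obtain ⟨p, hp, hmin⟩ := isCompact_Icc.exists_isMinOn (nonempty_Icc.2 hcd) hVc
  have hweighted := mul_setIntegral_sq_sub_le_of_isMinOn hVc hV hp hmin hf
    ((integrable_gibbsMeasure_iff measurableSet_Icc hVc).1 hf'2)
  rw [← integral_gibbsMeasure measurableSet_Icc hVc fun x => (f x - f p) ^ 2,
    ← integral_gibbsMeasure measurableSet_Icc hVc fun x => f' x ^ 2] at hweighted
  rw [one_div_mul_eq_div, le_div_iff₀' hr]
  exact (mul_le_mul_of_nonneg_left (Var_le_integral_sub_sq _ f (f p)) hr.le).trans hweighted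

end GibbsMeasure

theorem exists_seq_Icc_exhaustion {Ω : Set ℝ} (hΩo : IsOpen Ω) (hΩc : Ω.OrdConnected)
    (hΩne : Ω.Nonempty) :
    ∃ c d : ℕ → ℝ, (∀ n, c n ≤ d n) ∧ (∀ n, Icc (c n) (d n) ⊆ Ω) ∧
      ∀ x ∈ Ω, ∀ᶠ n in atTop, x ∈ Icc (c n) (d n) := by
  obtain ⟨x₀, hx₀⟩ := hΩne
  have : LocallyCompactSpace Ω := hΩo.locallyCompactSpace
  let E := CompactExhaustion.choice Ω
  set K : ℕ → Set ℝ := fun n => insert x₀ (Subtype.val '' E n)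
  have hcpt : ∀ n, IsCompact (K n) := fun n =>
    ((E.isCompact n).image continuous_subtype_val).insert x₀
  have hne : ∀ n, (K n).Nonempty := fun n => insert_nonempty _ _
  have hKΩ : ∀ n, K n ⊆ Ω := fun n =>
    insert_subset hx₀ (image_subset_iff.2 fun x _ => x.2)
  have hsub : ∀ n, K n ⊆ Icc (sInf (K n)) (sSup (K n)) := fun n x hx =>
    ⟨csInf_le (hcpt n).bddBelow hx, le_csSup (hcpt n).bddAbove hx⟩
  refine ⟨fun n => sInf (K n), fun n => sSup (K n), fun n => nonempty_Icc.1 ((hne n).mono (hsub n)),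
    fun n => hΩc.out (hKΩ n ((hcpt n).sInf_mem (hne n))) (hKΩ n ((hcpt n).sSup_mem (hne n))),
    fun x hx => ?_⟩
  obtain ⟨N, hN⟩ := E.exists_mem ⟨x, hx⟩
  filter_upwards [eventually_ge_atTop N] with n hn
  exact hsub n (mem_insert_of_mem x₀ ⟨⟨x, hx⟩, E.subset hn hN, rfl⟩)

theorem stmt18_general {Ω : Set ℝ} (hΩo : IsOpen Ω) (hΩne : Ω.Nonempty) {V : ℝ → ℝ}
    [IsFiniteMeasure (gibbsMeasure Ω V)] {r : ℝ} (hr : 0 < r) (hV : StrongConvexOn Ω r V) :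
    PoincareOn (gibbsMeasure Ω V) Ω (1 / r) := by
  have hVc : ContinuousOn V Ω := (hV.strictConvexOn hr).convexOn.continuousOn hΩo
  obtain ⟨c, d, hcd, hsub, hexh⟩ := exists_seq_Icc_exhaustion hΩo hV.1.ordConnected hΩne
  have hcover : AECover (gibbsMeasure Ω V) atTop fun n => Icc (c n) (d n) :=
    ⟨(ae_mem_gibbsMeasure hΩo.measurableSet V).mono hexh, fun _ => measurableSet_Icc⟩
  refine PoincareOn.of_aecover (one_div_pos.2 hr).le hcover hsub fun n => ?_
  rw [gibbsMeasure_restrict measurableSet_Icc (hsub n)]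
  exact poincareOn_gibbsMeasure_Icc (hcd n) hr (hVc.mono (hsub n))
    ⟨convex_Icc _ _, fun _ hx _ hy => hV.2 (hsub n hx) (hsub n hy)⟩

/-- Bakry–Émery criterion in dimension one: if `V'' ≥ r > 0` on `Ω`, the
measure `e^{-V} 1_Ω dx` satisfies a Poincaré inequality with constant `1/r`. -/
theorem stmt18 (Ω : Set ℝ) (hΩo : IsOpen Ω) (hΩc : Ω.OrdConnected) (hΩne : Ω.Nonempty)
    (V V' V'' : ℝ → ℝ)
    (hV' : ∀ x ∈ Ω, HasDerivAt V (V' x) x)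
    (hV'' : ∀ x ∈ Ω, HasDerivAt V' (V'' x) x)
    (hV''c : ContinuousOn V'' Ω)
    (μ : Measure ℝ)
    (hμ : μ = MeasureTheory.volume.withDensity fun x =>
      ENNReal.ofReal (Set.indicator Ω (fun y => Real.exp (-(V y))) x))
    [IsProbabilityMeasure μ]
    (r : ℝ) (hr : 0 < r) (hconv : ∀ x ∈ Ω, r ≤ V'' x) :
    PoincareOn μ Ω (1/r) := by
  obtain rfl := hμ.trans (withDensity_indicator_exp_neg hΩo.measurableSet V)
  exact stmt18_general hΩo hΩne hr (strongConvexOn_of_le_hasDerivAt2 hΩc.convex hV' hV'' hconv)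
end
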